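/- arXiv:2503.06461 — 2 statements merged into one kernel-verified Lean document; each statement's English description precedes it below -/
import Mathlib

section
/- Let n ≥ 1 be a natural number, η > 0, r ≥ 1, 0 < ε < η real numbers, and set b* = (ln r)/(2·√n·η). Let μ₋ be the n-fold product on ℝ^n of the real Gaussian measure with mean −η and variance 1. Then μ₋({x ∈ ℝ^n : ∃ δ ∈ ℝ^n, (∀ k, |δ_k| ≤ ε) ∧ (1/√n)·∑_{k=1}^n (x_k + δ_k) + b* > 0}) = Φ(−√n·(η−ε) + (ln r)/(2·√n·η)). (Theorem 1: robust error on the tail class −1 of the optimal natural classifier f*_nat under ℓ∞ perturbations of size ε.) -/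
open MeasureTheory ProbabilityTheory

/-- The standard normal CDF, as an `ℝ≥0∞`-valued measure of `Iic t`. -/
noncomputable def stdNormalCDF (t : ℝ) : ENNReal := gaussianReal 0 1 (Set.Iic t)

/-! Against a linear score `∑ k, w k * x k`, the adversary's best perturbation in the box
`|δ k| ≤ ε k` is `δ k = SignType.sign (w k) * ε k`, which raises the score by `∑ k, |w k| * ε k`.
The robust error is therefore the probability that a Gaussian variable exceeds a shifted threshold,
and reflecting and standardizing that variable turns the probability into a value of
`stdNormalCDF`. -/

open scoped NNReal

theorem exists_abs_le_and_lt_sum_mul_add_iff {ι R : Type*} [Fintype ι] [Ring R] [LinearOrder R]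
    [IsStrictOrderedRing R] {ε : ι → R} (hε : ∀ k, 0 ≤ ε k) (w x : ι → R) (t : R) :
    (∃ δ : ι → R, (∀ k, |δ k| ≤ ε k) ∧ t < ∑ k, w k * (x k + δ k)) ↔
      t < ∑ k, w k * x k + ∑ k, |w k| * ε k := by
  simp_rw [mul_add, Finset.sum_add_distrib]
  constructor
  · rintro ⟨δ, hδ, ht⟩
    have hbound : ∑ k, w k * δ k ≤ ∑ k, |w k| * ε k := Finset.sum_le_sum fun k _ =>
      calc w k * δ k ≤ |w k| * |δ k| := (le_abs_self _).trans_eq (abs_mul _ _)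
        _ ≤ |w k| * ε k := by gcongr; exact hδ k
    exact ht.trans_le (by gcongr)
  · intro ht
    refine ⟨fun k => SignType.sign (w k) * ε k, fun k => ?_, ?_⟩
    · have hsign : |(SignType.sign (w k) : R)| ≤ 1 := by
        cases SignType.sign (w k) <;> simp
      rw [abs_mul, abs_of_nonneg (hε k)]
      exact mul_le_of_le_one_left (hε k) hsign
    · simpa only [← mul_assoc, self_mul_sign] using ht

theorem gaussianReal_Ioi (m : ℝ) {v : ℝ≥0} (hv : v ≠ 0) (t : ℝ) :
    gaussianReal m v (Set.Ioi t) = stdNormalCDF ((m - t) / √v) := by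
  have hsqrt : 0 < √(v : ℝ) := Real.sqrt_pos.2 (by positivity)
  have hstd : HasLaw (fun y => (m - y) / √v) (gaussianReal 0 1) (gaussianReal m v) := by
    convert! gaussianReal_div_const (gaussianReal_const_sub HasLaw.id m) √v using 2
    · simp
    · ext
      simp [hv]
  have : NullSingletonClass (gaussianReal 0 1) := nullSingletonClass_gaussianReal one_ne_zero
  calc gaussianReal m v (Set.Ioi t)
      = gaussianReal m v {y | (m - y) / √v < (m - t) / √v} := by
        congr 1
        ext y
        simp [div_lt_div_iff_of_pos_right hsqrt]
    _ = gaussianReal 0 1 (Set.Iio ((m - t) / √v)) := hstd.measure_eq measurableSet_Iio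
    _ = stdNormalCDF ((m - t) / √v) := measure_congr Iio_ae_eq_Iic

section IndependentGaussians

variable {ι Ω : Type*} [Fintype ι] {mΩ : MeasurableSpace Ω} {P : Measure Ω} {X : ι → Ω → ℝ}
  {m : ι → ℝ} {v : ι → ℝ≥0}

theorem hasLaw_sum_gaussianReal (hind : iIndepFun X P)
    (hX : ∀ k, HasLaw (X k) (gaussianReal (m k) (v k)) P) :
    HasLaw (fun ω => ∑ k, X k ω) (gaussianReal (∑ k, m k) (∑ k, v k)) P where
  aemeasurable := by fun_prop
  map_eq := by
    have := hind.isProbabilityMeasure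
    refine Measure.ext_of_charFun ?_
    ext t
    rw [hind.charFun_map_fun_sum_eq_prod fun k => (hX k).aemeasurable]
    simp only [Finset.prod_apply, (hX _).map_eq, charFun_gaussianReal, ← Complex.exp_sum]
    push_cast
    rw [Finset.sum_sub_distrib, Finset.mul_sum, Finset.sum_mul, Finset.sum_mul, Finset.sum_div]

theorem hasLaw_sum_mul_gaussianReal (hind : iIndepFun X P)
    (hX : ∀ k, HasLaw (X k) (gaussianReal (m k) (v k)) P) (w : ι → ℝ) :
    HasLaw (fun ω => ∑ k, w k * X k ω)
      (gaussianReal (∑ k, w k * m k) (∑ k, ‖w k‖₊ ^ 2 * v k)) P := by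
  refine hasLaw_sum_gaussianReal (hind.comp (fun k y => w k * y) fun k => by fun_prop) fun k => ?_
  convert! gaussianReal_const_mul (hX k) (w k) using 3
  ext
  simp

theorem measure_exists_perturbation_pos (hind : iIndepFun X P)
    (hX : ∀ k, HasLaw (X k) (gaussianReal (m k) (v k)) P) {w ε : ι → ℝ}
    (hw : ∑ k, w k ^ 2 * v k ≠ 0) (hε : ∀ k, 0 ≤ ε k) (b : ℝ) :
    P {ω | ∃ δ : ι → ℝ, (∀ k, |δ k| ≤ ε k) ∧ 0 < ∑ k, w k * (X k ω + δ k) + b} =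
      stdNormalCDF ((∑ k, w k * m k + ∑ k, |w k| * ε k + b) / √(∑ k, w k ^ 2 * v k)) := by
  have hvar : ((∑ k, ‖w k‖₊ ^ 2 * v k : ℝ≥0) : ℝ) = ∑ k, w k ^ 2 * v k := by simp
  have hvar_ne : ∑ k, ‖w k‖₊ ^ 2 * v k ≠ 0 := by
    rwa [← NNReal.coe_ne_zero, hvar]
  have hevent : {ω | ∃ δ : ι → ℝ, (∀ k, |δ k| ≤ ε k) ∧ 0 < ∑ k, w k * (X k ω + δ k) + b} =
      {ω | -(∑ k, |w k| * ε k + b) < ∑ k, w k * X k ω} := by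
    ext ω
    simp only [Set.mem_ofPred_eq, ← neg_lt_iff_pos_add, exists_abs_le_and_lt_sum_mul_add_iff hε]
    constructor <;> intro h <;> linarith
  rw [hevent, (hasLaw_sum_mul_gaussianReal hind hX w).measure_eq measurableSet_Ioi]
  refine (gaussianReal_Ioi _ hvar_ne _).trans ?_
  rw [hvar, sub_neg_eq_add, add_assoc]

end IndependentGaussians

theorem tail_robust_error_natural_general {n : ℕ} (hn : 1 ≤ n) (η b : ℝ) {ε : ℝ} (hε : 0 ≤ ε) :
    (Measure.pi fun _ : Fin n => gaussianReal (-η) 1)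
      {x : Fin n → ℝ | ∃ δ : Fin n → ℝ, (∀ k, |δ k| ≤ ε) ∧
        (1 / √n) * (∑ k, (x k + δ k)) + b > 0} = stdNormalCDF (-√n * (η - ε) + b) := by
  have hn_pos : (0 : ℝ) < n := by exact_mod_cast hn
  have hind : iIndepFun (fun (k : Fin n) (x : Fin n → ℝ) => x k)
      (Measure.pi fun _ : Fin n => gaussianReal (-η) 1) :=
    iIndepFun_pi (X := fun _ => id) fun _ => aemeasurable_id
  have hlaw (k : Fin n) : HasLaw (fun x : Fin n → ℝ => x k) (gaussianReal (-η) 1)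
      (Measure.pi fun _ : Fin n => gaussianReal (-η) 1) :=
    (measurePreserving_eval (fun _ : Fin n => gaussianReal (-η) 1) k).hasLaw
  have hvar : ∑ _k : Fin n, (1 / √n) ^ 2 * ((1 : ℝ≥0) : ℝ) = 1 := by
    simp [hn_pos.ne']
  have hmean : ∑ _k : Fin n, 1 / √n * -η + ∑ _k : Fin n, |1 / √n| * ε = -√n * (η - ε) := by
    have hweights : (n : ℝ) * (1 / √n) = √n := by rw [mul_one_div, Real.div_sqrt]
    simp only [Finset.sum_const, Finset.card_univ, Fintype.card_fin, nsmul_eq_mul,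
      abs_of_nonneg (one_div_nonneg.2 (Real.sqrt_nonneg _))]
    linear_combination (ε - η) * hweights
  simp_rw [gt_iff_lt, Finset.mul_sum]
  rw [measure_exists_perturbation_pos hind hlaw (hvar.trans_ne one_ne_zero) (fun _ => hε) b,
    hvar, hmean, Real.sqrt_one, div_one]

/-- Robust error on the tail class `−1` of the optimal natural classifier under
`ℓ∞` perturbations of size `ε`. -/
theorem tail_robust_error_natural (n : ℕ) (hn : 1 ≤ n) (η r ε : ℝ) (hη : 0 < η)
    (hr : 1 ≤ r) (hε : 0 < ε) (hεη : ε < η) :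
    (Measure.pi fun _ : Fin n => gaussianReal (-η) 1)
      {x : Fin n → ℝ | ∃ δ : Fin n → ℝ, (∀ k, |δ k| ≤ ε) ∧
        (1 / Real.sqrt n) * (∑ k, (x k + δ k)) + Real.log r / (2 * Real.sqrt n * η) > 0}
      = stdNormalCDF (-Real.sqrt n * (η - ε) + Real.log r / (2 * Real.sqrt n * η)) :=
  tail_robust_error_natural_general hn η _ hε.le
end

section
/- Let n ≥ 1 be a natural number, η > 0, r ≥ 1, 0 < ε < η real numbers, and set b*_rob = (ln r)/(2·√n·(η−ε)). Let μ₋ be the n-fold product on ℝ^n of the real Gaussian measure with mean −η and variance 1. Then μ₋({x ∈ ℝ^n : ∃ δ ∈ ℝ^n, (∀ k, |δ_k| ≤ ε) ∧ (1/√n)·∑_{k=1}^n (x_k + δ_k) + b*_rob > 0}) = Φ(−√n·(η−ε) + (ln r)/(2·√n·(η−ε))). (Theorem 1: robust error on the tail class −1 of the optimal robust classifier f*_rob under ℓ∞ perturbations of size ε.) -/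
open MeasureTheory ProbabilityTheory

/-!
The worst perturbation of an affine score with weights `w` pushes every coordinate by `ε` in the
direction of the sign of its weight. Since `ℓ¹` is dual to `ℓ∞`, this raises the score by exactly
`ε * ∑ |w k|`, so the robust error is an ordinary tail probability of the score with a shifted
bias. On independent Gaussian coordinates the score is Gaussian, and standardizing it gives the
value of `Φ`. For the uniform unit weights `1 / √n` the mean of the score is shifted by `√n * ε`
and its variance is `1`.
-/

open Set
open scoped NNReal

section RobustError

variable {ι : Type*} [Fintype ι] {ε : ℝ}

theorem isGreatest_sum_mul_of_abs_le (w : ι → ℝ) (hε : 0 ≤ ε) :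
    IsGreatest ((fun δ : ι → ℝ => ∑ k, w k * δ k) '' {δ | ∀ k, |δ k| ≤ ε}) (ε * ∑ k, |w k|) := by
  refine ⟨⟨fun k => ε * SignType.sign (w k), fun k => ?_, ?_⟩, ?_⟩
  · obtain h | h | h := lt_trichotomy (w k) 0 <;> simp [h, abs_of_nonneg hε, hε]
  · simp only [mul_left_comm _ ε, self_mul_sign, Finset.mul_sum]
  · rintro _ ⟨δ, hδ, rfl⟩
    calc ∑ k, w k * δ k
        ≤ ∑ k, |w k| * |δ k| := Finset.sum_le_sum fun k _ => (le_abs_self _).trans_eq (abs_mul _ _)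
      _ ≤ ∑ k, |w k| * ε := by gcongr with k; exact hδ k
      _ = ε * ∑ k, |w k| := by rw [← Finset.sum_mul, mul_comm]

theorem exists_perturbation_sum_mul_add_pos_iff (w x : ι → ℝ) (b : ℝ) (hε : 0 ≤ ε) :
    (∃ δ : ι → ℝ, (∀ k, |δ k| ≤ ε) ∧ 0 < ∑ k, w k * (x k + δ k) + b) ↔
      -(ε * ∑ k, |w k| + b) < ∑ k, w k * x k := by
  have score_pos_iff (δ : ι → ℝ) : 0 < ∑ k, w k * (x k + δ k) + b ↔
      -(∑ k, w k * x k + b) < ∑ k, w k * δ k := by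
    simp only [mul_add, Finset.sum_add_distrib]
    constructor <;> intro h <;> linarith
  have exists_iff := lt_isLUB_iff (b := -(∑ k, w k * x k + b))
    (isGreatest_sum_mul_of_abs_le w hε).isLUB
  simp only [exists_mem_image, mem_ofPred_eq] at exists_iff
  simp only [score_pos_iff, ← exists_iff]
  constructor <;> intro h <;> linarith

theorem hasLaw_sum_gaussianReal_of_iIndepFun {Ω : Type*} {mΩ : MeasurableSpace Ω}
    {P : Measure Ω} {X : ι → Ω → ℝ} {m : ι → ℝ} {v : ι → ℝ≥0}
    (hX : ∀ i, HasLaw (X i) (gaussianReal (m i) (v i)) P) (hindep : iIndepFun X P) :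
    HasLaw (fun ω => ∑ i, X i ω) (gaussianReal (∑ i, m i) (∑ i, v i)) P where
  aemeasurable := Finset.aemeasurable_fun_sum _ fun i _ => (hX i).aemeasurable
  map_eq := by
    have := hindep.isProbabilityMeasure
    refine Measure.ext_of_charFun (funext fun t => ?_)
    rw [hindep.charFun_map_fun_sum_eq_prod fun i => (hX i).aemeasurable, Finset.prod_apply]
    simp only [(hX _).map_eq, charFun_gaussianReal, ← Complex.exp_sum]
    push_cast
    simp only [Finset.sum_sub_distrib, Finset.mul_sum, Finset.sum_mul, Finset.sum_div]

theorem hasLaw_sum_mul_pi_gaussianReal (w m : ι → ℝ) (v : ι → ℝ≥0) :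
    HasLaw (fun x : ι → ℝ => ∑ i, w i * x i)
      (gaussianReal (∑ i, w i * m i) (∑ i, ‖w i‖₊ ^ 2 * v i))
      (Measure.pi fun i => gaussianReal (m i) (v i)) := by
  refine hasLaw_sum_gaussianReal_of_iIndepFun (fun i => ?_)
    (iIndepFun_pi (X := fun i y => w i * y) fun i => by fun_prop)
  have nnnorm_sq : NNReal.mk (w i ^ 2) (sq_nonneg _) = ‖w i‖₊ ^ 2 := by ext; simp
  have coord_law := (measurePreserving_eval (fun i => gaussianReal (m i) (v i)) i).hasLaw
  simpa only [nnnorm_sq] using gaussianReal_const_mul coord_law (w i)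

theorem gaussianReal_Ioi_eq_stdNormalCDF (m a : ℝ) {v : ℝ≥0} (hv : v ≠ 0) :
    gaussianReal m v (Ioi a) = stdNormalCDF ((m - a) / √v) := by
  have sqrt_pos : 0 < √(v : ℝ) := Real.sqrt_pos.2 (by positivity)
  have law : HasLaw (fun y => (m - y) / √v) (gaussianReal 0 1) (gaussianReal m v) := by
    have var_eq : v / .mk (√(v : ℝ) ^ 2) (sq_nonneg _) = 1 := by
      ext
      simp [hv]
    simpa only [var_eq, sub_self, zero_div, id_eq] using
      gaussianReal_div_const (gaussianReal_const_sub (HasLaw.id (μ := gaussianReal m v)) m) √v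
  have := nullSingletonClass_gaussianReal (μ := 0) one_ne_zero
  calc gaussianReal m v (Ioi a)
      = gaussianReal m v {y | (m - y) / √v < (m - a) / √v} := by
        simp only [div_lt_div_iff_of_pos_right sqrt_pos, sub_lt_sub_iff_left, Ioi_def]
    _ = gaussianReal 0 1 (Iio ((m - a) / √v)) := law.measure_eq measurableSet_Iio
    _ = stdNormalCDF ((m - a) / √v) := measure_congr Iio_ae_eq_Iic

theorem pi_gaussianReal_exists_perturbation_sum_mul_add_pos (w m : ι → ℝ) (v : ι → ℝ≥0) (b : ℝ)
    (hε : 0 ≤ ε) (hv : ∑ i, ‖w i‖₊ ^ 2 * v i ≠ 0) :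
    (Measure.pi fun i => gaussianReal (m i) (v i))
      {x | ∃ δ : ι → ℝ, (∀ k, |δ k| ≤ ε) ∧ 0 < ∑ k, w k * (x k + δ k) + b}
      = stdNormalCDF ((∑ i, w i * m i + ε * ∑ i, |w i| + b) /
          √(∑ i, ‖w i‖₊ ^ 2 * v i : ℝ≥0)) := by
  simp only [exists_perturbation_sum_mul_add_pos_iff w _ b hε]
  refine ((hasLaw_sum_mul_pi_gaussianReal w m v).measure_eq measurableSet_Ioi).trans ?_
  refine (gaussianReal_Ioi_eq_stdNormalCDF _ _ hv).trans ?_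
  rw [sub_neg_eq_add, add_assoc]

theorem tail_robust_error_robust_general [Nonempty ι] (η b : ℝ) (hε : 0 ≤ ε) :
    (Measure.pi fun _ : ι => gaussianReal (-η) 1)
      {x : ι → ℝ | ∃ δ : ι → ℝ, (∀ k, |δ k| ≤ ε) ∧
        (1 / √(Fintype.card ι)) * (∑ k, (x k + δ k)) + b > 0}
      = stdNormalCDF (-√(Fintype.card ι) * (η - ε) + b) := by
  set s := √(Fintype.card ι : ℝ)
  have hs : 0 < s := Real.sqrt_pos.2 (by exact_mod_cast Fintype.card_pos)
  have card_eq : (Fintype.card ι : ℝ) = s ^ 2 := (Real.sq_sqrt (Nat.cast_nonneg _)).symm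
  have variance_eq_one : ∑ _ : ι, ‖1 / s‖₊ ^ 2 * (1 : ℝ≥0) = 1 := by
    ext
    simp [card_eq, hs.ne']
  simp only [Finset.mul_sum, gt_iff_lt]
  refine (pi_gaussianReal_exists_perturbation_sum_mul_add_pos (fun _ => 1 / s) (fun _ => -η)
    (fun _ => 1) b hε (variance_eq_one.trans_ne one_ne_zero)).trans (congrArg stdNormalCDF ?_)
  rw [variance_eq_one, NNReal.coe_one, Real.sqrt_one, div_one]
  simp only [Finset.sum_const, Finset.card_univ, nsmul_eq_mul, card_eq,
    abs_of_pos (one_div_pos.2 hs)]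
  field_simp
  ring

end RobustError

/-- Robust error on the tail class `−1` of the optimal robust classifier under
`ℓ∞` perturbations of size `ε`. -/
theorem tail_robust_error_robust (n : ℕ) (hn : 1 ≤ n) (η r ε : ℝ) (hη : 0 < η)
    (hr : 1 ≤ r) (hε : 0 < ε) (hεη : ε < η) :
    (Measure.pi fun _ : Fin n => gaussianReal (-η) 1)
      {x : Fin n → ℝ | ∃ δ : Fin n → ℝ, (∀ k, |δ k| ≤ ε) ∧
        (1 / Real.sqrt n) * (∑ k, (x k + δ k)) + Real.log r / (2 * Real.sqrt n * (η - ε)) > 0}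
      = stdNormalCDF (-Real.sqrt n * (η - ε) + Real.log r / (2 * Real.sqrt n * (η - ε))) := by
  have : Nonempty (Fin n) := ⟨⟨0, hn⟩⟩
  simpa only [Fintype.card_fin] using tail_robust_error_robust_general (ι := Fin n) η _ hε.le
end
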